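/- arXiv:1812.09640 — 2 statements merged into one kernel-verified Lean document; each statement's English description precedes it below -/
import Mathlib

section
/- Assume π̄(a) > 0 for every a ∈ A, and assume the NIAS inequalities hold for a utility u : X×A → ℝ: for all a, b ∈ A, ∑_{x∈X} p(x|a)·(u(x,a) − u(x,b)) ≥ 0. Then: (i) for every revealed signal s ∈ S', the Bayesian posterior computed from the prior μ and the revealed attention function α' at signal s equals s itself, i.e., μ(x)α'(s|x)/∑_y μ(y)α'(s|y) = s(x) for all x; and (ii) the revealed choice function is Bayes-optimal: for every s ∈ S' and a ∈ A, η'(a|s) > 0 implies ∑_x s(x)·u(x,a) ≥ ∑_x s(x)·u(x,b) for all b ∈ A. -/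
open Finset
open scoped Classical

/-- The induced action probability `π̄(a) = ∑_x μ(x) π(a|x)`. -/
noncomputable def actProb {X A : Type*} [Fintype X]
    (μ : X → ℝ) (π : X → A → ℝ) (a : A) : ℝ :=
  ∑ x, μ x * π x a

/-- The revealed posterior `p(·|a)`, as a function on `X`:
`p(x|a) = μ(x) π(a|x) / π̄(a)`. -/
noncomputable def revPost {X A : Type*} [Fintype X]
    (μ : X → ℝ) (π : X → A → ℝ) (a : A) : X → ℝ :=
  fun x => μ x * π x a / actProb μ π a

/-- The revealed attention function `α'(s|x) = ∑_{a : p(·|a) = s} π(a|x)`. -/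
noncomputable def revAtt {X A : Type*} [Fintype X] [Fintype A]
    (μ : X → ℝ) (π : X → A → ℝ) (s : X → ℝ) (x : X) : ℝ :=
  ∑ a, if revPost μ π a = s then π x a else 0

/-- The revealed choice function
`η'(a|s) = π̄(a) 1{p(·|a) = s} / ∑_{b : p(·|b) = s} π̄(b)`. -/
noncomputable def revChoice {X A : Type*} [Fintype X] [Fintype A]
    (μ : X → ℝ) (π : X → A → ℝ) (s : X → ℝ) (a : A) : ℝ :=
  (actProb μ π a * if revPost μ π a = s then (1:ℝ) else 0) /
    ∑ b, if revPost μ π b = s then actProb μ π b else 0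

/-- If the NIAS inequalities hold for utility `u`, then (i) every revealed signal `s` is
a fixed point of Bayesian updating of the prior via the revealed attention function, and
(ii) the revealed choice function is Bayes-optimal for `u`. -/
theorem revealed_bayes_consistency_of_nias
    {X A : Type*} [Fintype X] [Fintype A]
    (μ : X → ℝ) (hμpos : ∀ x, 0 < μ x) (hμsum : ∑ x, μ x = 1)
    (π : X → A → ℝ) (hπnn : ∀ x a, 0 ≤ π x a) (hπsum : ∀ x, ∑ a, π x a = 1)
    (hπbar : ∀ a, 0 < actProb μ π a)
    (u : X → A → ℝ)
    (hNIAS : ∀ a b, 0 ≤ ∑ x, revPost μ π a x * (u x a - u x b)) :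
    ((∀ s : X → ℝ, (∃ a, revPost μ π a = s) →
        ∀ x, μ x * revAtt μ π s x / (∑ y, μ y * revAtt μ π s y) = s x)
    ∧
    (∀ s : X → ℝ, (∃ a, revPost μ π a = s) →
        ∀ a, 0 < revChoice μ π s a →
          ∀ b, ∑ x, s x * u x b ≤ ∑ x, s x * u x a)) := by
  have key : ∀ s : X → ℝ, ∀ x, μ x * revAtt μ π s x =
      s x * ∑ b, if revPost μ π b = s then actProb μ π b else 0 := by
    intro s x
    unfold revAtt
    rw [Finset.mul_sum, Finset.mul_sum]
    refine Finset.sum_congr rfl fun b _ => ?_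
    by_cases h : revPost μ π b = s
    · rw [if_pos h, if_pos h, ← h]
      unfold revPost
      rw [div_mul_cancel₀ _ (hπbar b).ne']
    · rw [if_neg h, if_neg h, mul_zero, mul_zero]
  refine ⟨?_, ?_⟩
  · rintro s ⟨a, ha⟩ x
    have hs : ∑ y, s y = 1 := by
      rw [← ha]
      unfold revPost
      rw [← Finset.sum_div]
      exact div_self (hπbar a).ne'
    have hD : 0 < ∑ b, if revPost μ π b = s then actProb μ π b else 0 := by
      refine Finset.sum_pos' (fun b _ => ?_) ⟨a, Finset.mem_univ a, ?_⟩
      · split_ifs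
        · exact (hπbar b).le
        · exact le_rfl
      · rw [if_pos ha]
        exact hπbar a
    simp only [key]
    rw [← Finset.sum_mul, hs, one_mul, mul_div_assoc, div_self hD.ne', mul_one]
  · rintro s - a hc b
    have ha : revPost μ π a = s := by
      by_contra h
      unfold revChoice at hc
      rw [if_neg h] at hc
      simp at hc
    have h := hNIAS a b
    rw [ha] at h
    simp only [mul_sub, Finset.sum_sub_distrib] at h
    linarith
end

section
/- Assume π̄(a) > 0 for every a ∈ A. Then the revealed attention function and revealed choice function reproduce the policy (the data-matching condition): for every x ∈ X and a ∈ A, π(a|x) = ∑_{s ∈ S'} α'(s|x)·η'(a|s). Moreover, for each x, ∑_{s∈S'} α'(s|x) = 1 and α'(s|x) ≥ 0, i.e., α' is an attention function. -/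
open Finset
open scoped Classical

/-- The revealed signal set `S' = {p(·|a) : a ∈ A}`. -/
noncomputable def revSignals {X A : Type*} [Fintype X] [Fintype A]
    (μ : X → ℝ) (π : X → A → ℝ) : Finset (X → ℝ) :=
  Finset.univ.image (revPost μ π)

/-- Data matching: the revealed attention and choice functions reproduce the observed
action-selection policy, and the revealed attention function is a bona fide attention
function (nonnegative, summing to one over the revealed signal set). -/
theorem revealed_data_matching
    {X A : Type*} [Fintype X] [Fintype A]
    (μ : X → ℝ) (hμpos : ∀ x, 0 < μ x) (hμsum : ∑ x, μ x = 1)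
    (π : X → A → ℝ) (hπnn : ∀ x a, 0 ≤ π x a) (hπsum : ∀ x, ∑ a, π x a = 1)
    (hπbar : ∀ a, 0 < actProb μ π a) :
    ((∀ x a, π x a = ∑ s ∈ revSignals μ π, revAtt μ π s x * revChoice μ π s a)
    ∧ (∀ x, ∑ s ∈ revSignals μ π, revAtt μ π s x = 1)
    ∧ (∀ s x, 0 ≤ revAtt μ π s x)) := by
  have key : ∀ x b, π x b = revPost μ π b x / μ x * actProb μ π b := by
    intro x b
    have h1 := (hμpos x).ne'
    have h2 := (hπbar b).ne'
    unfold revPost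
    field_simp
  refine ⟨?_, ?_, ?_⟩
  · intro x a
    have hmem : revPost μ π a ∈ revSignals μ π :=
      Finset.mem_image_of_mem _ (Finset.mem_univ a)
    rw [Finset.sum_eq_single_of_mem _ hmem]
    · have hD : 0 < ∑ b, if revPost μ π b = revPost μ π a then actProb μ π b else 0 := by
        apply Finset.sum_pos'
        · intro b _
          split_ifs
          · exact (hπbar b).le
          · exact le_rfl
        · exact ⟨a, Finset.mem_univ a, by simpa using hπbar a⟩
      have hA : revAtt μ π (revPost μ π a) x = revPost μ π a x / μ x *
          ∑ b, if revPost μ π b = revPost μ π a then actProb μ π b else 0 := by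
        unfold revAtt
        rw [Finset.mul_sum]
        refine Finset.sum_congr rfl fun b _ => ?_
        split_ifs with h
        · rw [key x b, h]
        · simp
      rw [hA, revChoice, if_pos rfl, mul_one, mul_assoc, mul_div_cancel₀ _ hD.ne']
      exact key x a
    · intro s _ hs
      simp [revChoice, Ne.symm hs]
  · intro x
    unfold revAtt
    rw [Finset.sum_comm, ← hπsum x]
    refine Finset.sum_congr rfl fun a _ => ?_
    rw [Finset.sum_ite_eq]
    exact if_pos (Finset.mem_image_of_mem _ (Finset.mem_univ a))
  · intro s x
    unfold revAtt
    refine Finset.sum_nonneg fun a _ => ?_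
    split_ifs
    · exact hπnn x a
    · exact le_rfl
end
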